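/- Let Sh be the shift endofunctor of FI-modules over ℂ, defined by (Sh M)(S) = M(S ⊔ {∗}), and let ι_M : M → Sh M be the natural transformation induced by the inclusions S ↪ S ⊔ {∗}. Extend Sh and ι termwise to bounded complexes of FI-modules, and for a bounded complex C let ∂(C) denote the mapping cone of ι_C : C → Sh C. Then for every finitely generated FI-module M over ℂ (regarded as a complex concentrated in degree 0) there exist nonnegative integers n_1 and n_2 such that the complex ∂^{n_1}(Sh^{n_2} M) is exact, i.e. it vanishes in the bounded derived category of FI-modules. -/

import Mathlib

open CategoryTheory

structure FIObj where
  α : Type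
  fin : Fintype α

instance (S : FIObj) : Fintype S.α := S.fin

def FIObj.of (α : Type) [Fintype α] : FIObj := ⟨α, inferInstance⟩

instance : Category FIObj where
  Hom S T := {f : S.α → T.α // Function.Injective f}
  id S := ⟨id, Function.injective_id⟩
  comp f g := ⟨g.1 ∘ f.1, g.2.comp f.2⟩

/-- FI-modules over ℂ: functors from FI to ℂ-vector spaces. -/
abbrev FIMod := FIObj ⥤ ModuleCat.{0} ℂ

/-- A sub-FI-module. -/
structure FISub (M : FIMod) where
  carrier : ∀ S : FIObj, Submodule ℂ (M.obj S)
  map_mem : ∀ {S T : FIObj} (f : S ⟶ T) (x : M.obj S), x ∈ carrier S → M.map f x ∈ carrier T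

/-- A finitely generated FI-module. -/
def FIMod.FG (M : FIMod) : Prop :=
  ∃ (k : ℕ) (S : Fin k → FIObj) (m : ∀ i, M.obj (S i)),
    ∀ N : FISub M, (∀ i, m i ∈ N.carrier (S i)) → ∀ T, N.carrier T = ⊤
noncomputable section

/-- The endofunctor S ↦ S ⊔ {∗} of FI. -/
def plusOne : FIObj ⥤ FIObj where
  obj S := FIObj.of (S.α ⊕ PUnit)
  map f := ⟨Sum.map f.1 id, f.2.sumMap Function.injective_id⟩
  map_id := by
    intro S
    apply Subtype.ext
    funext x
    cases x <;> rfl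
  map_comp := by
    intro S T U f g
    apply Subtype.ext
    funext x
    cases x <;> rfl

/-- The shift endofunctor of FI-modules: (Sh M)(S) = M(S ⊔ {∗}). -/
def Sh : FIMod ⥤ FIMod := (CategoryTheory.Functor.whiskeringLeft FIObj FIObj (ModuleCat.{0} ℂ)).obj plusOne

instance : Sh.Additive := by
  constructor
  intro F G f g
  rfl

/-- The FI-morphism S → S ⊔ {∗}. -/
def inlHom (S : FIObj) : S ⟶ plusOne.obj S := ⟨Sum.inl, Sum.inl_injective⟩

/-- The natural transformation ι : id → Sh induced by the inclusions S ↪ S ⊔ {∗}. -/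
def shiftUnit : 𝟭 FIMod ⟶ Sh where
  app M :=
    { app := fun S => M.map (inlHom S)
      naturality := fun S T f => by
        dsimp [Sh]
        rw [← M.map_comp, ← M.map_comp]
        congr 1 }
  naturality := fun M N η => by
    apply NatTrans.ext
    funext S
    exact (η.naturality (inlHom S)).symm

abbrev FICx := CochainComplex FIMod ℤ

/-- The shift functor on complexes of FI-modules. -/
def ShCx : FICx ⥤ FICx := Sh.mapHomologicalComplex _

/-- The map of complexes C → Sh C. -/
def iotaCx (C : FICx) : C ⟶ ShCx.obj C where
  f i := shiftUnit.app (C.X i)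
  comm' := fun i j _ => (shiftUnit.naturality (C.d i j)).symm

/-- The functor ∂: the mapping cone of ι_C : C → Sh C. -/
def del (C : FICx) : FICx := CochainComplex.mappingCone (iotaCx C)


open Set in
theorem lead_term {B : Type} [LinearOrder B] [Finite B] {V : Type} [AddCommGroup V] [Module ℂ V]
    (v : B → V) (hv : Submodule.span ℂ (range v) = ⊤) (x : V) (hx : x ≠ 0) :
    ∃ b, v b ∉ Submodule.span ℂ (v '' Iio b) ∧
      ∃ c : ℂ, c ≠ 0 ∧ x - c • v b ∈ Submodule.span ℂ (v '' Iio b) := by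
  classical
  have := Fintype.ofFinite B
  let T : Finset B := Finset.univ.filter (fun b => v b ∉ Submodule.span ℂ (v '' Iio b))
  have hT : ∀ b, v b ∈ Submodule.span ℂ (v '' (T : Set B)) := by
    intro b
    induction b using WellFoundedLT.induction with
    | _ b ih =>
      by_cases hb : v b ∈ Submodule.span ℂ (v '' Iio b)
      · refine Submodule.span_le.2 ?_ hb
        rintro _ ⟨c, hc, rfl⟩
        exact ih c hc
      · exact Submodule.subset_span ⟨b, by simp [T, hb], rfl⟩
  have hxT : x ∈ Submodule.span ℂ (v '' (T : Set B)) := by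
    have : x ∈ Submodule.span ℂ (range v) := by rw [hv]; trivial
    refine Submodule.span_le.2 ?_ this
    rintro _ ⟨c, rfl⟩
    exact hT c
  have key : ∀ s : Finset B, x ∈ Submodule.span ℂ (v '' (s : Set B)) →
      ∃ b ∈ s, ∃ c : ℂ, c ≠ 0 ∧ x - c • v b ∈ Submodule.span ℂ (v '' Iio b) := by
    intro s
    induction s using Finset.induction_on_max with
    | empty => intro h; simp at h; exact absurd h hx
    | insert a s ha ih =>
      intro h
      rw [Finset.coe_insert, image_insert_eq, Submodule.mem_span_insert] at h
      obtain ⟨c, y, hy, rfl⟩ := h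
      by_cases hc : c = 0
      · subst hc
        obtain ⟨b, hb, h⟩ := ih (by simpa using hy)
        exact ⟨b, Finset.mem_insert_of_mem hb, h⟩
      · refine ⟨a, Finset.mem_insert_self _ _, c, hc, ?_⟩
        rw [add_sub_cancel_left]
        exact Submodule.span_mono (image_mono (fun z hz => ha z hz)) hy
  obtain ⟨b, hb, h⟩ := key T hxT
  exact ⟨b, by simpa [T] using hb, h⟩

/-- monomials -/
def BB (k : ℕ) (d : Fin k → ℕ) (n : ℕ) : Type := Σ i : Fin k, (Fin (d i) ↪ Fin n)

instance (k : ℕ) (d : Fin k → ℕ) (n : ℕ) : Finite (BB k d n) := by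
  unfold BB; infer_instance

def BB.seq {k : ℕ} {d : Fin k → ℕ} {n : ℕ} (b : BB k d n) (j : ℕ) : ℕ :=
  if h : j < d b.1 then (b.2 ⟨j, h⟩ : ℕ) else 0

def BB.key {k : ℕ} {d : Fin k → ℕ} {n : ℕ} (b : BB k d n) : Fin k ×ₗ Lex (ℕ → ℕ) :=
  toLex (b.1, toLex b.seq)

theorem BB.key_inj {k : ℕ} {d : Fin k → ℕ} {n : ℕ} :
    Function.Injective (BB.key : BB k d n → _) := by
  rintro ⟨i, f⟩ ⟨i', f'⟩ h
  have h' := congrArg ofLex h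
  simp only [BB.key, ofLex_toLex, Prod.mk.injEq] at h'
  obtain ⟨h1, h2⟩ := h'
  subst h1
  have : f = f' := by
    ext j
    have := congrFun (toLex.injective h2) j.1
    simpa [BB.seq] using this
  rw [this]

noncomputable instance BB.lo (k : ℕ) (d : Fin k → ℕ) (n : ℕ) : LinearOrder (BB k d n) :=
  LinearOrder.lift' BB.key BB.key_inj

def BB.act {k : ℕ} {d : Fin k → ℕ} {n n' : ℕ} (g : Fin n ↪o Fin n') (b : BB k d n) : BB k d n' :=
  ⟨b.1, b.2.trans g.toEmbedding⟩

theorem BB.act_lt {k : ℕ} {d : Fin k → ℕ} {n n' : ℕ} (g : Fin n ↪o Fin n') {b c : BB k d n}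
    (h : b < c) : b.act g < c.act g := by
  change b.key < c.key at h
  change (b.act g).key < (c.act g).key
  obtain ⟨i, f⟩ := b
  obtain ⟨i', f'⟩ := c
  rw [Prod.Lex.lt_iff] at h ⊢
  rcases h with h | ⟨h1, j, hj, hlt⟩
  · exact Or.inl h
  · right
    have h1 : i = i' := h1
    subst h1
    refine ⟨rfl, j, ?_, ?_⟩
    · intro j' hj'
      have := hj j' hj'
      simp only [BB.key, BB.seq, BB.act, ofLex_toLex, Pi.toLex_apply] at this ⊢
      split_ifs at this ⊢ with hh
      · have := Fin.ext this
        simp [this]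
      · rfl
    · simp only [BB.key, BB.seq, BB.act, ofLex_toLex, Pi.toLex_apply] at hlt ⊢
      split_ifs at hlt ⊢ with hh
      · simpa using hlt
      · simp at hlt

open Classical in
def BB.letter {k : ℕ} {d : Fin k → ℕ} {n : ℕ} (b : BB k d n) (p : Fin n) :
    Σ i : Fin k, Option (Fin (d i)) :=
  ⟨b.1, if h : ∃ s, b.2 s = p then some h.choose else none⟩

theorem BB.letter_app {k : ℕ} {d : Fin k → ℕ} {n : ℕ} (b : BB k d n) (s : Fin (d b.1)) :
    b.letter (b.2 s) = ⟨b.1, some s⟩ := by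
  have h : ∃ s', b.2 s' = b.2 s := ⟨s, rfl⟩
  simp only [BB.letter, dif_pos h]
  congr
  exact b.2.injective h.choose_spec

theorem BB.letter_some {k : ℕ} {d : Fin k → ℕ} {n : ℕ} (b : BB k d n) (p : Fin n) (s : Fin (d b.1))
    (h : b.letter p = ⟨b.1, some s⟩) : b.2 s = p := by
  unfold BB.letter at h
  split_ifs at h with hh
  · have h2 := Sigma.mk.inj_iff.1 h
    have := Option.some.inj (eq_of_heq h2.2)
    rw [← this]; exact hh.choose_spec
  · have h2 := Sigma.mk.inj_iff.1 h
    have := eq_of_heq h2.2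
    simp at this

theorem BB.act_of_letter {k : ℕ} {d : Fin k → ℕ} {n n' : ℕ} (hn : 0 < n) (g : Fin n ↪o Fin n')
    (b : BB k d n) (c : BB k d n') (h : ∀ p, b.letter p = c.letter (g p)) : c = b.act g := by
  have h0 := congrArg Sigma.fst (h ⟨0, hn⟩)
  obtain ⟨i, f⟩ := b
  obtain ⟨i', f'⟩ := c
  have h0 : i = i' := h0
  subst h0
  unfold BB.act
  congr 1
  ext s
  have h1 := h (f s)
  have h2 := BB.letter_app (d := d) ⟨i, f⟩ s
  change BB.letter (d := d) ⟨i, f⟩ (f s) = _ at h2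
  rw [h2] at h1
  have h3 := BB.letter_some (d := d) ⟨i, f'⟩ (g (f s)) s h1.symm
  exact congrArg Fin.val h3

theorem BB.wqo {k : ℕ} {d : Fin k → ℕ} (φ : ℕ → ℕ) (hφ : StrictMono φ)
    (b : ∀ n, BB k d (φ n)) :
    ∃ m n, m < n ∧ ∃ g : Fin (φ m) ↪o Fin (φ n), b n = (b m).act g := by
  let w : ℕ → List (Σ i : Fin k, Option (Fin (d i))) := fun n => List.ofFn (b (n+1)).letter
  have hf : (Set.univ : Set (Σ i : Fin k, Option (Fin (d i)))).PartiallyWellOrderedOn (· = ·) :=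
    Set.Finite.partiallyWellOrderedOn Set.finite_univ
  have H := hf.partiallyWellOrderedOn_sublistForall₂ (· = ·)
  obtain ⟨m, n, hmn, hs⟩ := H (fun n => ⟨w n, by intro x _; trivial⟩)
  replace hs : List.SublistForall₂ (· = ·) (w m) (w n) := hs
  rw [List.sublistForall₂_iff] at hs
  obtain ⟨l, hl, hs⟩ := hs
  rw [List.forall₂_eq_eq_eq] at hl
  subst hl
  rw [List.sublist_iff_exists_fin_orderEmbedding_get_eq] at hs
  obtain ⟨g, hg⟩ := hs
  have e1 : (w m).length = φ (m+1) := by simp [w]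
  have e2 : (w n).length = φ (n+1) := by simp [w]
  let g' : Fin (φ (m+1)) ↪o Fin (φ (n+1)) :=
    ((Fin.castOrderIso e1.symm).toOrderEmbedding.trans g).trans
      (Fin.castOrderIso e2).toOrderEmbedding
  refine ⟨m+1, n+1, by omega, g', ?_⟩
  apply BB.act_of_letter
  · have := hφ.le_apply (x := m+1); omega
  · intro p
    have := hg (Fin.cast e1.symm p)
    simp only [w, List.get_ofFn] at this
    exact this

def GenLT (d : ℕ) (M : FIMod) : Prop :=
  ∃ (ι : Type) (_ : Finite ι) (S : ι → FIObj) (m : ∀ i, M.obj (S i)),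
    (∀ i, Fintype.card (S i).α < d) ∧
    ∀ T, Submodule.span ℂ {x : M.obj T | ∃ (i : ι) (f : S i ⟶ T), x = (M.map f).hom (m i)} = ⊤

theorem map_comp_hom (M : FIMod) {S T U : FIObj} (f : S ⟶ T) (g : T ⟶ U) (x : M.obj S) :
    (M.map g).hom ((M.map f).hom x) = (M.map (f ≫ g)).hom x := by
  simp

theorem FG_gen (M : FIMod) (h : FIMod.FG M) : ∃ d, GenLT d M := by
  obtain ⟨k, S, m, h⟩ := h
  refine ⟨(Finset.univ.sup fun i => Fintype.card (S i).α) + 1, Fin k, inferInstance, S, m, ?_, ?_⟩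
  · intro i
    exact Nat.lt_succ_of_le (Finset.le_sup (f := fun i => Fintype.card (S i).α) (Finset.mem_univ i))
  · let N : FISub M :=
      { carrier := fun T => Submodule.span ℂ
          {x : M.obj T | ∃ (i : Fin k) (f : S i ⟶ T), x = (M.map f).hom (m i)}
        map_mem := by
          intro S' T f x hx
          change (M.map f).hom x ∈ _
          refine Submodule.span_induction ?_ ?_ ?_ ?_ hx
          · rintro _ ⟨i, g, rfl⟩
            rw [map_comp_hom]
            exact Submodule.subset_span ⟨i, _, rfl⟩
          · simp
          · intro x y _ _ hx hy
            rw [map_add]; exact add_mem hx hy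
          · intro c x _ hx
            rw [map_smul]; exact Submodule.smul_mem _ _ hx }
    exact h N (fun i => Submodule.subset_span ⟨i, 𝟙 _, by simp⟩)

theorem gen_norm {d : ℕ} {M : FIMod} (h : GenLT d M) :
    ∃ (k : ℕ) (e : Fin k → ℕ) (m : ∀ i, M.obj (FIObj.of (Fin (e i)))),
      ∀ T, Submodule.span ℂ {x : M.obj T | ∃ (i : Fin k) (f : FIObj.of (Fin (e i)) ⟶ T),
        x = (M.map f).hom (m i)} = ⊤ := by
  obtain ⟨ι, _, S, m, -, h⟩ := h
  obtain ⟨k, ⟨u⟩⟩ := Finite.exists_equiv_fin ι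
  let E : ∀ i, (S i).α ≃ Fin (Fintype.card (S i).α) := fun i => Fintype.equivFin _
  refine ⟨k, fun i => Fintype.card (S (u.symm i)).α,
    fun i => (M.map (Y := FIObj.of _) ⟨E (u.symm i), (E (u.symm i)).injective⟩).hom (m (u.symm i)), ?_⟩
  intro T
  rw [eq_top_iff, ← h T]
  apply Submodule.span_mono
  rintro _ ⟨i, f, rfl⟩
  obtain ⟨j, rfl⟩ := u.symm.surjective i
  refine ⟨j, ⟨f.1 ∘ (E (u.symm j)).symm, f.2.comp (E (u.symm j)).symm.injective⟩, ?_⟩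
  rw [map_comp_hom]
  congr 3
  apply Subtype.ext
  funext x
  change f.1 x = f.1 ((E (u.symm j)).symm (E (u.symm j) x))
  simp

theorem kill (M : FIMod) {S T : FIObj} (x : M.obj S) (hx : (M.map (inlHom S)).hom x = 0)
    (g : S ⟶ T) (hc : Fintype.card S.α < Fintype.card T.α) : (M.map g).hom x = 0 := by
  have : ∃ t, t ∉ Set.range g.1 := by
    by_contra! h
    exact absurd (Fintype.card_le_of_surjective g.1 h) (by omega)
  obtain ⟨t, ht⟩ := this
  let h : plusOne.obj S ⟶ T := ⟨Sum.elim g.1 (fun _ => t), by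
    apply g.2.sumElim (Function.injective_of_subsingleton _)
    intro a _ h
    exact ht ⟨a, h⟩⟩
  have : g = inlHom S ≫ h := rfl
  rw [this, ← map_comp_hom, hx, map_zero]

theorem eventually_inj {d : ℕ} {M : FIMod} (h : GenLT d M) :
    ∃ N, ∀ S : FIObj, N ≤ Fintype.card S.α → Function.Injective (M.map (inlHom S)).hom := by
  obtain ⟨k, e, m, hm⟩ := gen_norm h
  by_contra! hcon
  have hP : ∀ N, ∃ n > N, ∃ x : M.obj (FIObj.of (Fin n)), x ≠ 0 ∧
      ∀ n' > n, ∀ g : FIObj.of (Fin n) ⟶ FIObj.of (Fin n'), (M.map g).hom x = 0 := by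
    intro N
    obtain ⟨S, hS, hni⟩ := hcon (N+1)
    rw [injective_iff_map_eq_zero] at hni
    push Not at hni
    obtain ⟨x, hx, hx0⟩ := hni
    let E := Fintype.equivFin S.α
    let E1 : S ⟶ FIObj.of (Fin (Fintype.card S.α)) := ⟨E, E.injective⟩
    let E2 : FIObj.of (Fin (Fintype.card S.α)) ⟶ S := ⟨E.symm, E.symm.injective⟩
    have hE : E1 ≫ E2 = 𝟙 S := by
      apply Subtype.ext; funext x; exact E.symm_apply_apply x
    refine ⟨Fintype.card S.α, by omega, (M.map E1).hom x, ?_, ?_⟩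
    · intro h0
      apply hx0
      have := congrArg (M.map E2).hom h0
      rw [map_comp_hom, hE] at this
      simpa using this
    · intro n' hn' g
      rw [map_comp_hom]
      apply kill M x hx
      change _ < Fintype.card (Fin n')
      simpa using hn'
  obtain ⟨φ, hφ, hP⟩ := Nat.exists_strictMono_subsequence hP
  choose x hx0 hx using hP
  let v : ∀ n, BB k e n → M.obj (FIObj.of (Fin n)) := fun n b =>
    (M.map (Y := FIObj.of (Fin n)) (⟨b.2, b.2.injective⟩)).hom (m b.1)
  have hv : ∀ n, Submodule.span ℂ (Set.range (v n)) = ⊤ := by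
    intro n
    rw [eq_top_iff, ← hm]
    apply Submodule.span_mono
    rintro _ ⟨i, f, rfl⟩
    exact ⟨⟨i, ⟨f.1, f.2⟩⟩, rfl⟩
  choose b hb c hc hbc using fun n => lead_term (v (φ n)) (hv _) (x n) (hx0 n)
  obtain ⟨p, q, hpq, g, hg⟩ := BB.wqo φ hφ b
  let G : FIObj.of (Fin (φ p)) ⟶ FIObj.of (Fin (φ q)) := ⟨g, g.injective⟩
  have hG : ∀ a, (M.map G).hom (v _ a) = v _ (a.act g) := by
    intro a
    simp only [v]
    rw [map_comp_hom]
    rfl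
  have h1 : ∀ y ∈ Submodule.span ℂ (v (φ p) '' Set.Iio (b p)),
      (M.map G).hom y ∈ Submodule.span ℂ (v (φ q) '' Set.Iio (b q)) := by
    intro y hy
    have : (M.map G).hom y ∈ Submodule.map (M.map G).hom _ := Submodule.mem_map_of_mem hy
    rw [Submodule.map_span] at this
    refine Submodule.span_mono ?_ this
    rintro _ ⟨_, ⟨a, ha, rfl⟩, rfl⟩
    refine ⟨a.act g, ?_, (hG a).symm⟩
    rw [hg]
    exact BB.act_lt g ha
  have h2 := h1 _ (hbc p)
  rw [map_sub, map_smul, hx p _ (hφ hpq) G, hG, ← hg, zero_sub] at h2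
  apply hb q
  have h3 := Submodule.neg_mem _ h2
  rw [neg_neg] at h3
  exact (Submodule.smul_mem_iff _ (hc p)).1 h3

/-- the components of a map out of a shift -/
def pl {M Q : FIMod} (p : Sh.obj M ⟶ Q) (T : FIObj) : M.obj (plusOne.obj T) →ₗ[ℂ] Q.obj T :=
  (p.app T).hom

theorem pl_nat {M Q : FIMod} (p : Sh.obj M ⟶ Q) {S T : FIObj} (f : S ⟶ T)
    (x : M.obj (plusOne.obj S)) :
    pl p T ((M.map (plusOne.map f)).hom x) = (Q.map f).hom (pl p S x) :=
  congrArg (fun (q : M.obj (plusOne.obj S) ⟶ Q.obj T) => q.hom x) (p.naturality f)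

/-- coker relation -/
def CokRel (M Q : FIMod) (p : Sh.obj M ⟶ Q) : Prop :=
  ∀ S, Function.Surjective (pl p S) ∧
    ∀ z, pl p S z = 0 ↔ ∃ y : M.obj S, (M.map (inlHom S)).hom y = z

theorem CokRel.gen {d : ℕ} {M Q : FIMod} {p : Sh.obj M ⟶ Q} (h : CokRel M Q p)
    (hM : GenLT (d+1) M) : GenLT d Q := by
  classical
  obtain ⟨ι, _, S, m, hd, hm⟩ := hM
  let σ' : ∀ i (j : (S i).α), (S i).α → {s : (S i).α // s ≠ j} ⊕ PUnit := fun i j s =>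
    if h : s = j then Sum.inr PUnit.unit else Sum.inl ⟨s, h⟩
  have hσ' : ∀ i j, Function.Injective (σ' i j) := by
    intro i j s t hst
    simp only [σ'] at hst
    by_cases h1 : s = j <;> by_cases h2 : t = j <;> simp [h1, h2] at hst ⊢
    exact hst
  let σ : ∀ i (j : (S i).α), S i ⟶ plusOne.obj (FIObj.of {s : (S i).α // s ≠ j}) := fun i j =>
    ⟨σ' i j, hσ' i j⟩
  refine ⟨Σ i, (S i).α, inferInstance, fun a => FIObj.of {s : (S a.1).α // s ≠ a.2},
    fun a => pl p _ ((M.map (σ a.1 a.2)).hom (m a.1)), ?_, ?_⟩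
  · rintro ⟨i, j⟩
    have := hd i
    change Fintype.card {s : (S i).α // s ≠ j} < d
    have h2 : Fintype.card {s : (S i).α // s ≠ j} = Fintype.card (S i).α - 1 := by simp
    have h3 : 0 < Fintype.card (S i).α := Fintype.card_pos_iff.2 ⟨j⟩
    omega
  · intro T
    rw [eq_top_iff]
    rintro y -
    obtain ⟨z, rfl⟩ := (h T).1 y
    have hz : z ∈ (⊤ : Submodule ℂ (M.obj (plusOne.obj T))) := trivial
    rw [← hm] at hz
    induction hz using Submodule.span_induction with
    | mem z hz =>
      obtain ⟨i, f, rfl⟩ := hz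
      by_cases hf : ∃ j, f.1 j = Sum.inr PUnit.unit
      · obtain ⟨j, hj⟩ := hf
        have hl : ∀ s : {s : (S i).α // s ≠ j}, ∃ t : T.α, f.1 s = Sum.inl t := by
          rintro ⟨s, hs⟩
          rcases hfs : f.1 s with t | t
          · exact ⟨t, rfl⟩
          · exact absurd (f.2 (hfs.trans hj.symm)) hs
        choose t ht using hl
        let f' : FIObj.of {s : (S i).α // s ≠ j} ⟶ T := ⟨t, by
          intro a b hab
          apply Subtype.ext
          apply f.2
          exact (ht a).trans ((congrArg Sum.inl hab).trans (ht b).symm)⟩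
        have hff : f = σ i j ≫ plusOne.map f' := by
          apply Subtype.ext
          funext s
          change f.1 s = Sum.map t id (σ' i j s)
          by_cases hs : s = j
          · simp only [σ', hs, hj, dif_pos]; rfl
          · simp only [σ', hs, dif_neg, not_false_iff]; exact ht ⟨s, hs⟩
        apply Submodule.subset_span
        refine ⟨⟨i, j⟩, f', ?_⟩
        rw [hff, ← map_comp_hom, pl_nat]
      · have hl : ∀ s : (S i).α, ∃ t : T.α, f.1 s = Sum.inl t := by
          intro s
          rcases hfs : f.1 s with t | t
          · exact ⟨t, rfl⟩
          · exact absurd ⟨s, hfs⟩ hf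
        choose t ht using hl
        let f' : S i ⟶ T := ⟨t, by
          intro a b hab
          apply f.2
          rw [ht, ht, hab]⟩
        have hff : f = f' ≫ inlHom T := by
          apply Subtype.ext
          funext s
          exact ht s
        have : pl p T ((M.map f).hom (m i)) = 0 := by
          rw [hff, ← map_comp_hom]
          exact ((h T).2 _).2 ⟨_, rfl⟩
        rw [this]; exact zero_mem _
    | zero => rw [map_zero]; exact zero_mem _
    | add x y _ _ hx hy => rw [map_add]; exact add_mem hx hy
    | smul c x _ hx => rw [map_smul]; exact Submodule.smul_mem _ _ hx

def swapFun (α : Type) : (α ⊕ PUnit.{1}) ⊕ PUnit.{1} → (α ⊕ PUnit.{1}) ⊕ PUnit.{1} :=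
  Sum.elim (Sum.elim (fun s => Sum.inl (Sum.inl s)) (fun _ => Sum.inr PUnit.unit))
    (fun _ => Sum.inl (Sum.inr PUnit.unit))

theorem swapFun_swapFun (α : Type) (x) : swapFun α (swapFun α x) = x := by
  rcases x with (a | a) | a <;> rfl

/-- swap of two added points -/
def swapHom (S : FIObj) : plusOne.obj (plusOne.obj S) ⟶ plusOne.obj (plusOne.obj S) :=
  ⟨swapFun S.α, Function.LeftInverse.injective (swapFun_swapFun S.α)⟩

theorem swap_swap (S : FIObj) : swapHom S ≫ swapHom S = 𝟙 _ := by
  apply Subtype.ext; funext x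
  exact swapFun_swapFun S.α x

theorem swap_nat {S T : FIObj} (f : S ⟶ T) :
    plusOne.map (plusOne.map f) ≫ swapHom T = swapHom S ≫ plusOne.map (plusOne.map f) := by
  apply Subtype.ext; funext x
  rcases x with (a | a) | a <;> rfl

theorem inl_swap (S : FIObj) :
    inlHom (plusOne.obj S) ≫ swapHom S = plusOne.map (inlHom S) := by
  apply Subtype.ext; funext x
  rcases x with a | a <;> rfl

def swapNat (M : FIMod) : Sh.obj (Sh.obj M) ⟶ Sh.obj (Sh.obj M) where
  app S := M.map (swapHom S)
  naturality S T f := by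
    change M.map _ ≫ M.map _ = M.map _ ≫ M.map _
    rw [← M.map_comp, ← M.map_comp]
    exact congrArg M.map (swap_nat f)

theorem map_swap_swap (M : FIMod) (S : FIObj) (z : M.obj (plusOne.obj (plusOne.obj S))) :
    (M.map (swapHom S)).hom ((M.map (swapHom S)).hom z) = z := by
  rw [map_comp_hom, swap_swap]; simp

theorem cokRel_sh_aux {M Q : FIMod} {p : Sh.obj M ⟶ Q} (h : CokRel M Q p) (S : FIObj) :
    (∀ y, ∃ z : M.obj (plusOne.obj (plusOne.obj S)),
      pl p (plusOne.obj S) ((M.map (swapHom S)).hom z) = y) ∧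
    ∀ z : M.obj (plusOne.obj (plusOne.obj S)),
      pl p (plusOne.obj S) ((M.map (swapHom S)).hom z) = 0 ↔
      ∃ y : M.obj (plusOne.obj S), (M.map (plusOne.map (inlHom S))).hom y = z := by
  obtain ⟨h1, h2⟩ := h (plusOne.obj S)
  constructor
  · intro y
    obtain ⟨z, hz⟩ := h1 y
    refine ⟨(M.map (swapHom S)).hom z, ?_⟩
    rw [map_swap_swap]; exact hz
  · intro z
    rw [h2, ← inl_swap]
    constructor
    · rintro ⟨y, hy⟩
      exact ⟨y, by rw [← map_comp_hom, hy, map_swap_swap]⟩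
    · rintro ⟨y, hy⟩
      exact ⟨y, by rw [← hy, ← map_comp_hom, map_swap_swap]⟩

theorem CokRel.sh {M Q : FIMod} {p : Sh.obj M ⟶ Q} (h : CokRel M Q p) :
    CokRel (Sh.obj M) (Sh.obj Q) (swapNat M ≫ Sh.map p) :=
  fun S => cokRel_sh_aux h S

theorem exists_cok (M : FIMod) : ∃ Q p, CokRel M Q p := by
  refine ⟨Limits.cokernel (shiftUnit.app M), Limits.cokernel.π (shiftUnit.app M), fun S => ?_⟩
  have hE : (ShortComplex.mk _ _ (Limits.cokernel.condition (shiftUnit.app M))).Exact :=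
    ShortComplex.exact_cokernel _
  have hE' := hE.map ((evaluation FIObj (ModuleCat.{0} ℂ)).obj S)
  constructor
  · exact (ModuleCat.epi_iff_surjective
      ((Limits.cokernel.π (shiftUnit.app M)).app S)).1 inferInstance
  · exact (ShortComplex.ShortExact.moduleCat_exact_iff_function_exact _).1 hE'

def DD : ℕ → FIMod → Prop
  | 0, M => ∀ S, Subsingleton (M.obj S)
  | d+1, M => ∃ Q p, CokRel M Q p ∧ (∀ S, Function.Injective (M.map (inlHom S)).hom) ∧ DD d Q

theorem inj_sh {M : FIMod} {N : ℕ}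
    (h : ∀ S : FIObj, N ≤ Fintype.card S.α → Function.Injective (M.map (inlHom S)).hom) :
    ∀ S : FIObj, N ≤ Fintype.card S.α + 1 →
      Function.Injective ((Sh.obj M).map (inlHom S)).hom := by
  intro S hS
  change ∀ x y : M.obj (plusOne.obj S), _
  intro x y hxy
  apply h (plusOne.obj S) (by
    change N ≤ Fintype.card (S.α ⊕ PUnit); simpa using hS)
  replace hxy : (M.map (plusOne.map (inlHom S))).hom x = (M.map (plusOne.map (inlHom S))).hom y := hxy
  rw [← inl_swap, ← map_comp_hom, ← map_comp_hom] at hxy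
  have := congrArg (M.map (swapHom S)).hom hxy
  rwa [map_swap_swap, map_swap_swap] at this

theorem DD.sh {d : ℕ} : ∀ {M : FIMod}, DD d M → DD d (Sh.obj M) := by
  induction d with
  | zero => intro M h S; exact h _
  | succ d ih =>
    rintro M ⟨Q, p, h1, h2, h3⟩
    exact ⟨_, _, h1.sh, fun S => inj_sh (N := 0) (fun S _ => h2 S) S (Nat.zero_le _), ih h3⟩

theorem DD.sh_iter {d : ℕ} {M : FIMod} (h : DD d M) (n : ℕ) : DD d (Sh.obj^[n] M) := by
  induction n with
  | zero => exact h
  | succ n ih => rw [Function.iterate_succ_apply']; exact ih.sh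

theorem inj_iter {M : FIMod} {N : ℕ}
    (h : ∀ S : FIObj, N ≤ Fintype.card S.α → Function.Injective (M.map (inlHom S)).hom) (n : ℕ) :
    ∀ S : FIObj, N ≤ Fintype.card S.α + n →
      Function.Injective ((Sh.obj^[n] M).map (inlHom S)).hom := by
  induction n with
  | zero => exact h
  | succ n ih =>
    rw [Function.iterate_succ_apply']
    intro S hS
    refine inj_sh (N := N - n) (fun S hS => ih S (by omega)) S (by omega)

theorem cok_iter {M Q : FIMod} (h : ∃ p, CokRel M Q p) (n : ℕ) :
    ∃ p, CokRel (Sh.obj^[n] M) (Sh.obj^[n] Q) p := by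
  induction n with
  | zero => exact h
  | succ n ih =>
    rw [Function.iterate_succ_apply', Function.iterate_succ_apply']
    obtain ⟨p, hp⟩ := ih
    exact ⟨_, hp.sh⟩

theorem gen_DD {d : ℕ} : ∀ {M : FIMod}, GenLT d M → ∃ n, DD d (Sh.obj^[n] M) := by
  induction d with
  | zero =>
    rintro M ⟨ι, _, S, m, hd, hm⟩
    refine ⟨0, fun T => ?_⟩
    have : IsEmpty ι := ⟨fun i => absurd (hd i) (by omega)⟩
    have h2 := hm T
    simp only [IsEmpty.exists_iff, Set.ofPred_false, Submodule.span_empty] at h2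
    exact (Submodule.subsingleton_iff (M := M.obj T) ℂ).1 (subsingleton_of_bot_eq_top h2)
  | succ d ih =>
    intro M h
    obtain ⟨Q, p, hp⟩ := exists_cok M
    obtain ⟨n, hn⟩ := ih (hp.gen h)
    obtain ⟨N, hN⟩ := eventually_inj h
    refine ⟨N + n, ?_⟩
    obtain ⟨p', hp'⟩ := cok_iter ⟨p, hp⟩ (N + n)
    refine ⟨_, p', hp', fun S => inj_iter hN _ S (by omega), ?_⟩
    rw [Function.iterate_add_apply]
    exact hn.sh_iter N

instance Sh_preservesFiniteLimits : Limits.PreservesFiniteLimits Sh := by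
  unfold Sh
  exact ⟨fun J _ _ => inferInstance⟩

instance Sh_preservesFiniteColimits : Limits.PreservesFiniteColimits Sh := by
  unfold Sh
  exact ⟨fun J _ _ => inferInstance⟩

instance Sh_preservesHomology : Sh.PreservesHomology := inferInstance

theorem iota_nat {C D : FICx} (φ : C ⟶ D) :
    iotaCx C ≫ ShCx.map φ = φ ≫ iotaCx D := by
  ext1 i
  exact (shiftUnit.naturality (φ.f i)).symm

theorem del_quasi {C D : FICx} (φ : C ⟶ D) [QuasiIso φ] :
    ∃ ψ : del C ⟶ del D, QuasiIso ψ := by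
  let _ : HasDerivedCategory FIMod := HasDerivedCategory.standard FIMod
  have h2 : QuasiIso (ShCx.map φ) :=
    HomologicalComplex.quasiIso_map_of_preservesHomology φ Sh
  let T := CochainComplex.mappingCone.triangleMap (iotaCx C) (iotaCx D) φ (ShCx.map φ) (iota_nat φ)
  refine ⟨CochainComplex.mappingCone.map _ _ φ (ShCx.map φ) (iota_nat φ), ?_⟩
  refine (DerivedCategory.isIso_Q_map_iff_quasiIso (C := FIMod) _).1 ?_
  exact Pretriangulated.isIso₃_of_isIso₁₂ (DerivedCategory.Q.mapTriangle.map T)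
    (DerivedCategory.mappingCone_triangle_distinguished _)
    (DerivedCategory.mappingCone_triangle_distinguished _)
    ((DerivedCategory.isIso_Q_map_iff_quasiIso (C := FIMod) φ).2 ‹QuasiIso φ›)
    ((DerivedCategory.isIso_Q_map_iff_quasiIso (C := FIMod) (ShCx.map φ)).2 h2)

theorem del_iter_quasi {C D : FICx} (φ : C ⟶ D) [QuasiIso φ] (n : ℕ) :
    ∃ ψ : del^[n] C ⟶ del^[n] D, QuasiIso ψ := by
  induction n with
  | zero => exact ⟨φ, ‹QuasiIso φ›⟩
  | succ n ih =>
    rw [Function.iterate_succ_apply', Function.iterate_succ_apply']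
    obtain ⟨ψ, h⟩ := ih
    exact del_quasi ψ

abbrev sg : FIMod ⥤ FICx := HomologicalComplex.single FIMod (ComplexShape.up ℤ) 0

def shSingle (M : FIMod) : ShCx.obj (sg.obj M) ≅ sg.obj (Sh.obj M) :=
  (HomologicalComplex.singleMapHomologicalComplex Sh (ComplexShape.up ℤ) 0).app M

theorem shSingle_f (M : FIMod) : (shSingle M).hom.f 0 =
    Sh.map (HomologicalComplex.singleObjXSelf (ComplexShape.up ℤ) 0 M).hom ≫
      (HomologicalComplex.singleObjXSelf (ComplexShape.up ℤ) 0 (Sh.obj M)).inv :=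
  HomologicalComplex.singleMapHomologicalComplex_hom_app_self _ _ _ _

theorem iota_single (M : FIMod) :
    iotaCx (sg.obj M) ≫ (shSingle M).hom = sg.map (shiftUnit.app M) := by
  apply HomologicalComplex.from_single_hom_ext
  rw [HomologicalComplex.comp_f, shSingle_f, HomologicalComplex.single_map_f_self]
  have h := shiftUnit.naturality (HomologicalComplex.singleObjXSelf (ComplexShape.up ℤ) 0 M).hom
  have h' := congrArg
    (· ≫ (HomologicalComplex.singleObjXSelf (ComplexShape.up ℤ) 0 (Sh.obj M)).inv) h.symm
  simp only [Category.assoc] at h'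
  exact h'

theorem del_single {M Q : FIMod} {p : Sh.obj M ⟶ Q} (h : CokRel M Q p)
    (hi : ∀ S, Function.Injective (M.map (inlHom S)).hom) :
    ∃ ψ : del (sg.obj M) ⟶ sg.obj Q, QuasiIso ψ := by
  have w : shiftUnit.app M ≫ p = 0 := by
    apply NatTrans.ext
    funext S
    apply ModuleCat.hom_ext
    apply LinearMap.ext
    intro x
    exact ((h S).2 _).2 ⟨x, rfl⟩
  have hSE : (ShortComplex.mk _ _ w).ShortExact := by
    have he : (ShortComplex.mk _ _ w).Exact := by
      rw [ShortComplex.exact_iff_isZero_homology, Functor.isZero_iff]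
      intro S
      have hS : ((ShortComplex.mk _ _ w).map
          ((evaluation FIObj (ModuleCat.{0} ℂ)).obj S)).Exact :=
        (ShortComplex.ShortExact.moduleCat_exact_iff_function_exact _).2 (h S).2
      rw [ShortComplex.exact_iff_isZero_homology] at hS
      exact hS.of_iso ((ShortComplex.mk _ _ w).mapHomologyIso
        ((evaluation FIObj (ModuleCat.{0} ℂ)).obj S)).symm
    have hm : Mono (shiftUnit.app M) := by
      have : ∀ S, Mono ((shiftUnit.app M).app S) := fun S =>
        (ModuleCat.mono_iff_injective _).2 (hi S)
      exact NatTrans.mono_of_mono_app _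
    have hp : Epi p := by
      have : ∀ S, Epi (p.app S) := fun S => (ModuleCat.epi_iff_surjective _).2 (h S).1
      exact NatTrans.epi_of_epi_app _
    exact { exact := he, mono_f := hm, epi_g := hp }
  have hS2 := hSE.map_of_exact sg
  have w' : iotaCx (sg.obj M) ≫ ((shSingle M).hom ≫ sg.map p) = 0 := by
    rw [← Category.assoc, iota_single, ← sg.map_comp, w, sg.map_zero]
  let S1 : ShortComplex FICx :=
    ShortComplex.mk (iotaCx (sg.obj M)) ((shSingle M).hom ≫ sg.map p) w'
  let S2 : ShortComplex FICx := (ShortComplex.mk _ _ w).map sg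
  let ee : S1 ≅ S2 := ShortComplex.isoMk (Iso.refl _) (shSingle M) (Iso.refl _)
    ((Category.id_comp _).trans (iota_single M).symm) (Category.comp_id _).symm
  have hS1 : S1.ShortExact := ShortComplex.shortExact_of_iso ee.symm hS2
  exact ⟨_, CochainComplex.mappingCone.quasiIso_descShortComplex hS1⟩

theorem DD_exact {d : ℕ} : ∀ {M : FIMod}, DD d M → ∀ i, (del^[d] (sg.obj M)).ExactAt i := by
  induction d with
  | zero =>
    intro M h i
    have hM : Limits.IsZero M := by
      rw [Functor.isZero_iff]
      intro S
      have := h S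
      exact ModuleCat.isZero_of_subsingleton _
    have hz : Limits.IsZero (sg.obj M) := Functor.map_isZero _ hM
    rw [HomologicalComplex.exactAt_iff_isZero_homology]
    exact Functor.map_isZero (HomologicalComplex.homologyFunctor FIMod _ i) hz
  | succ d ih =>
    rintro M ⟨Q, p, h1, h2, h3⟩ i
    obtain ⟨ψ, hψ⟩ := del_single h1 h2
    obtain ⟨χ, hχ⟩ := del_iter_quasi ψ d
    rw [Function.iterate_succ_apply]
    exact (exactAt_iff_of_quasiIsoAt χ i).2 (ih h3 i)

/-- For every finitely generated FI-module M, regarded as a complex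
concentrated in degree 0, there are n₁, n₂ ≥ 0 such that ∂^{n₁}(Sh^{n₂} M) is exact,
i.e. vanishes in the bounded derived category. -/
theorem fg_FIMod_differential_equation (M : FIMod) (hM : FIMod.FG M) :
    ∃ n₁ n₂ : ℕ, ∀ i : ℤ,
      (del^[n₁]
        ((HomologicalComplex.single FIMod (ComplexShape.up ℤ) 0).obj
          ((Sh.obj)^[n₂] M))).ExactAt i := by
  obtain ⟨d, hd⟩ := FG_gen M hM
  obtain ⟨n, hn⟩ := gen_DD hd
  exact ⟨d, n, DD_exact hn⟩

end
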